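/- Let a < b be real numbers and let f : ℝ → ℂ be an exponential polynomial, i.e. f(t) = Σ_{k=1}^{m} p_k(t)·e^{λ_k t} for finitely many polynomials p_k ∈ ℂ[X] and complex numbers λ_k. Suppose that for every n ∈ ℕ there exists a function g_n integrable on (a,b) such that f(t) = (I_a^[n] g_n)(t) for almost every t ∈ (a,b). Then f(t) = 0 for every t ∈ (a,b). -/

import Mathlib

/-!
An `(n + 1)`-fold indefinite integral from `a` of a function integrable near `a` is
`O((t - a) ^ n)` as `t` tends to `a` from the right. Hence `f = O((t - a) ^ n)` for every `n` along
a conull set, and such a set accumulates at `a` from the right. An analytic function that is not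
identically zero near `a` behaves there like `c (t - a) ^ k` with `c ≠ 0`, which rules this out.
So `f` vanishes near `a`, and by the identity theorem on any connected domain of analyticity
containing `a`.
-/

open MeasureTheory Polynomial

/-- The indefinite-integral operator `(I_a g)(t) = ∫_a^t g(s) ds` for complex-valued `g`. -/
noncomputable def indefInt (a : ℝ) (g : ℝ → ℂ) : ℝ → ℂ := fun t => ∫ s in a..t, g s

open Set Filter Topology Asymptotics

section IndefIntegral

variable {E : Type*} [NormedAddCommGroup E] [NormedSpace ℝ E] {a : ℝ} {f g : ℝ → E}

/-- The indefinite-integral operator `indefInt` for functions with values in a real normed space.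
On complex-valued functions the two operators are definitionally equal. Mathlib's
convention makes the integral `0` when `E` is not complete. -/
noncomputable def indefIntegral (a : ℝ) (g : ℝ → E) : ℝ → E := fun t => ∫ s in a..t, g s

theorem isBigO_one_indefIntegral (hg : IntegrableAtFilter g (𝓝[>] a)) :
    indefIntegral a g =O[𝓝[>] a] fun _ => (1 : ℝ) := by
  obtain ⟨s, hs, hgs⟩ := hg
  obtain ⟨u, hau, hus⟩ := mem_nhdsGT_iff_exists_Ioc_subset.1 hs
  refine IsBigO.of_bound (∫ x in Ioc a u, ‖g x‖) ?_
  filter_upwards [Ioc_mem_nhdsGT hau] with t ht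
  calc ‖∫ x in a..t, g x‖
      ≤ ∫ x in uIoc a t, ‖g x‖ := intervalIntegral.norm_integral_le_integral_norm_uIoc
    _ = ∫ x in Ioc a t, ‖g x‖ := by rw [uIoc_of_le ht.1.le]
    _ ≤ ∫ x in Ioc a u, ‖g x‖ :=
      setIntegral_mono_set (hgs.mono_set hus).norm (.of_forall fun _ => norm_nonneg _)
        (Ioc_subset_Ioc_right ht.2).eventuallyLE
    _ = (∫ x in Ioc a u, ‖g x‖) * ‖(1 : ℝ)‖ := by rw [norm_one, mul_one]

theorem isBigO_pow_succ_indefIntegral {n : ℕ} (hf : f =O[𝓝[>] a] fun t => (t - a) ^ n) :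
    indefIntegral a f =O[𝓝[>] a] fun t => (t - a) ^ (n + 1) := by
  obtain ⟨C, hC, hbound⟩ := hf.exists_nonneg
  obtain ⟨u, hau, hu⟩ := mem_nhdsGT_iff_exists_Ioc_subset.1 hbound.bound
  refine IsBigO.of_bound C ?_
  filter_upwards [Ioc_mem_nhdsGT hau] with t ht
  have hf_le : ∀ s ∈ uIoc a t, ‖f s‖ ≤ C * (t - a) ^ n := by
    rw [uIoc_of_le ht.1.le]
    intro s hs
    have hsa : 0 ≤ s - a := sub_nonneg.2 hs.1.le
    calc ‖f s‖ ≤ C * ‖(s - a) ^ n‖ := hu ⟨hs.1, hs.2.trans ht.2⟩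
      _ = C * (s - a) ^ n := by rw [Real.norm_of_nonneg (pow_nonneg hsa n)]
      _ ≤ C * (t - a) ^ n := by gcongr; exact hs.2
  have hta : 0 ≤ t - a := sub_nonneg.2 ht.1.le
  calc ‖∫ s in a..t, f s‖
      ≤ C * (t - a) ^ n * |t - a| := intervalIntegral.norm_integral_le_of_norm_le_const hf_le
    _ = C * ‖(t - a) ^ (n + 1)‖ := by
      rw [abs_of_nonneg hta, Real.norm_of_nonneg (pow_nonneg hta _), pow_succ, mul_assoc]

theorem isBigO_pow_iterate_indefIntegral (hg : IntegrableAtFilter g (𝓝[>] a)) (n : ℕ) :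
    (indefIntegral a)^[n + 1] g =O[𝓝[>] a] fun t => (t - a) ^ n := by
  induction n with
  | zero => simpa only [pow_zero, zero_add, Function.iterate_one] using isBigO_one_indefIntegral hg
  | succ n ih =>
    rw [Function.iterate_succ_apply']
    exact isBigO_pow_succ_indefIntegral ih

end IndefIntegral

theorem neBot_nhdsGT_inf_ae {X : Type*} [TopologicalSpace X] [LinearOrder X] [OrderTopology X]
    [DenselyOrdered X] [NoMaxOrder X] [MeasurableSpace X] (μ : Measure X) [μ.IsOpenPosMeasure]
    (a : X) : (𝓝[>] a ⊓ ae μ).NeBot := by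
  rw [inf_neBot_iff]
  intro s hs t ht
  obtain ⟨u, hau, hus⟩ := mem_nhdsGT_iff_exists_Ioo_subset.1 hs
  by_contra hst
  have hsub : Ioo a u ⊆ tᶜ := fun x hx hxt => hst ⟨x, hus hx, hxt⟩
  exact ((Measure.measure_Ioo_pos μ).2 hau).ne' (measure_mono_null hsub ht)

theorem eventually_eq_zero_of_forall_isBigO_pow {𝕜 E : Type*} [NontriviallyNormedField 𝕜]
    [NormedAddCommGroup E] [NormedSpace 𝕜 E] {f : 𝕜 → E} {z₀ : 𝕜} {l : Filter 𝕜} [l.NeBot]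
    (hl : l ≤ 𝓝[≠] z₀) (hf : AnalyticAt 𝕜 f z₀)
    (hflat : ∀ n : ℕ, f =O[l] fun z => (z - z₀) ^ n) : ∀ᶠ z in 𝓝 z₀, f z = 0 := by
  by_contra hne
  obtain ⟨k, h, hh, hz₀, hfac⟩ := hf.exists_eventuallyEq_pow_smul_nonzero_iff.2 hne
  have hl' : l ≤ 𝓝 z₀ := hl.trans nhdsWithin_le_nhds
  have hpow_f : (fun z => (z - z₀) ^ k) =O[l] f := by
    have hone_h : (fun _ => (1 : 𝕜)) =O[l] h :=
      (isBigO_const_const 1 hz₀ l).trans ((isEquivalent_const_iff_tendsto hz₀).2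
        (hh.continuousAt.tendsto.mono_left hl')).isBigO_symm
    calc (fun z => (z - z₀) ^ k)
        = fun z => (z - z₀) ^ k • (1 : 𝕜) := by simp only [smul_eq_mul, mul_one]
      _ =O[l] fun z => (z - z₀) ^ k • h z := (isBigO_refl _ l).smul hone_h
      _ =ᶠ[l] f := EventuallyEq.symm (hl' hfac)
  have hsub : Tendsto (fun z => z - z₀) l (𝓝 0) := by
    simpa using (tendsto_id.mono_left hl').sub_const z₀
  have hpow_self : (fun z => (z - z₀) ^ k) =o[l] fun z => (z - z₀) ^ k :=
    (hpow_f.trans (hflat (k + 1))).trans_isLittleO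
      ((isLittleO_pow_pow k.lt_succ_self).comp_tendsto hsub)
  have hne_pow : ∀ᶠ z in l, (z - z₀) ^ k ≠ 0 :=
    (eventually_mem_nhdsWithin.filter_mono hl).mono fun z hz => pow_ne_zero k (sub_ne_zero.2 hz)
  exact isLittleO_irrefl hne_pow.frequently hpow_self

theorem eventually_eq_zero_of_forall_eventuallyEq_iterate_indefIntegral {E : Type*}
    [NormedAddCommGroup E] [NormedSpace ℝ E] {a : ℝ} {f : ℝ → E} (hf : AnalyticAt ℝ f a)
    (hint : ∀ n : ℕ, ∃ g : ℝ → E, IntegrableAtFilter g (𝓝[>] a) ∧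
      f =ᶠ[𝓝[>] a ⊓ ae volume] (indefIntegral a)^[n] g) :
    ∀ᶠ t in 𝓝 a, f t = 0 := by
  have := neBot_nhdsGT_inf_ae volume a
  refine eventually_eq_zero_of_forall_isBigO_pow (l := 𝓝[>] a ⊓ ae volume)
    (inf_le_left.trans (nhdsGT_le_nhdsNE a)) hf fun n => ?_
  obtain ⟨g, hg, hfg⟩ := hint (n + 1)
  exact hfg.trans_isBigO ((isBigO_pow_iterate_indefIntegral hg n).mono inf_le_left)

theorem analyticOnNhd_sum_eval_mul_cexp {ι : Type*} (s : Finset ι) (p : ι → ℂ[X]) (lam : ι → ℂ) :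
    AnalyticOnNhd ℝ (fun t : ℝ => ∑ k ∈ s, (p k).eval (t : ℂ) * Complex.exp (lam k * t)) univ := by
  intro t _
  have hcoe : AnalyticAt ℝ ((↑) : ℝ → ℂ) t := Complex.ofRealCLM.analyticAt t
  refine s.analyticAt_fun_sum fun k _ => ?_
  exact (hcoe.aeval_polynomial (p k)).mul
    (analyticAt_cexp.restrictScalars.comp (analyticAt_const.mul hcoe))

theorem exponential_polynomial_infinitely_integrable_eq_zero_general {E : Type*}
    [NormedAddCommGroup E] [NormedSpace ℝ E] [CompleteSpace E] {a b : ℝ} (hab : a < b)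
    {f : ℝ → E} {U : Set ℝ} (hf : AnalyticOnNhd ℝ f U) (hU : IsPreconnected U) (ha : a ∈ U)
    (hint : ∀ n : ℕ, ∃ g : ℝ → E, IntegrableOn g (Ioo a b) ∧
      ∀ᵐ t ∂(volume.restrict (Ioo a b)), f t = (indefIntegral a)^[n] g t) :
    EqOn f 0 U := by
  have hmem : Ioo a b ∈ 𝓝[>] a := Ioo_mem_nhdsGT hab
  have hae : 𝓝[>] a ⊓ ae volume ≤ ae (volume.restrict (Ioo a b)) := by
    rw [ae_restrict_eq measurableSet_Ioo]
    exact le_inf inf_le_right (inf_le_left.trans (le_principal_iff.2 hmem))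
  refine hf.eqOn_zero_of_preconnected_of_eventuallyEq_zero hU ha
    (eventually_eq_zero_of_forall_eventuallyEq_iterate_indefIntegral (hf a ha) fun n => ?_)
  obtain ⟨g, hg, hfg⟩ := hint n
  exact ⟨g, ⟨Ioo a b, hmem, hg⟩, hfg.filter_mono hae⟩

/-- If an exponential polynomial `f(t) = Σ_k p_k(t)·e^{λ_k t}` is, for every
`n ∈ ℕ`, a.e. on `(a,b)` equal to the `n`-fold indefinite integral from `a` of some function
integrable on `(a,b)`, then `f` vanishes identically on `(a,b)`. -/
theorem exponential_polynomial_infinitely_integrable_eq_zero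
    (a b : ℝ) (hab : a < b) (f : ℝ → ℂ)
    (m : ℕ) (p : Fin m → Polynomial ℂ) (lam : Fin m → ℂ)
    (hf : ∀ t : ℝ, f t = ∑ k, (p k).eval (t : ℂ) * Complex.exp (lam k * t))
    (hint : ∀ n : ℕ, ∃ g : ℝ → ℂ, IntegrableOn g (Set.Ioo a b) ∧
      ∀ᵐ t ∂(volume.restrict (Set.Ioo a b)), f t = (indefInt a)^[n] g t) :
    ∀ t ∈ Set.Ioo a b, f t = 0 := by
  have hf' : AnalyticOnNhd ℝ f univ := funext hf ▸ analyticOnNhd_sum_eval_mul_cexp _ p lam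
  exact fun t _ => exponential_polynomial_infinitely_integrable_eq_zero_general hab hf'
    isPreconnected_univ (mem_univ a) hint (mem_univ t)
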